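/- Let p be a prime and let V be a finite vector space over the field 𝔽_p with |V| ≥ 3. Suppose G₀ is a subgroup of GL(V) acting transitively on the set V ∖ {0} of nonzero vectors. Then there exists a nonidentity element g ∈ G₀ whose action on V is quasi-semiregular with unique fixed point 0; that is, no nonidentity power of g fixes any nonzero vector of V. -/

import Mathlib

lemma aux_num {p n : ℕ} (hp : 2 ≤ p) (h3 : 3 ≤ p ^ n) :
    ∃ r a : ℕ, r.Prime ∧ 0 < a ∧ r ^ a ∣ p ^ n - 1 ∧
      ∀ m, 0 < m → m < n → ¬ r ^ a ∣ p ^ m - 1 := by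
  have hn : 0 < n := by
    rcases Nat.eq_zero_or_pos n with rfl | h
    · simp at h3
    · exact h
  set c : ℤ := (Polynomial.cyclotomic n ℤ).eval (p : ℤ) with hc
  have hc1 : c.natAbs ≠ 1 := by
    rcases Nat.lt_or_ge 1 n with h | h
    · have := Polynomial.sub_one_lt_natAbs_cyclotomic_eval (n := n) (q := p) h (by omega)
      omega
    · obtain rfl : n = 1 := by omega
      simp only [hc, Polynomial.cyclotomic_one, Polynomial.eval_sub, Polynomial.eval_X,
        Polynomial.eval_one]
      simp only [pow_one] at h3
      omega
  obtain ⟨r, hr, hrc⟩ := Nat.exists_prime_and_dvd hc1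
  have hcd : c ∣ (p : ℤ) ^ n - 1 := by
    have := Polynomial.eval_dvd (x := (p : ℤ)) (Polynomial.cyclotomic.dvd_X_pow_sub_one n ℤ)
    simpa using this
  have cast : ∀ k, ((p ^ k - 1 : ℕ) : ℤ) = (p : ℤ) ^ k - 1 := fun k => by
    have : 1 ≤ p ^ k := Nat.one_le_pow _ _ (by omega)
    push_cast [this]; rfl
  have hne : p ^ n - 1 ≠ 0 := by omega
  have hrc' : (r : ℤ) ∣ c := Int.natCast_dvd.mpr hrc
  have hrn : r ∣ p ^ n - 1 := by
    rw [← Int.natCast_dvd_natCast, cast]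
    exact hrc'.trans hcd
  refine ⟨r, (p ^ n - 1).factorization r, hr, hr.factorization_pos_of_dvd hne hrn,
    Nat.ordProj_dvd _ _, ?_⟩
  intro m hm hmn hdvd
  set a := (p ^ n - 1).factorization r
  have hg : r ^ a ∣ p ^ (Nat.gcd m n) - 1 := by
    rw [← Nat.pow_sub_one_gcd_pow_sub_one]
    exact Nat.dvd_gcd hdvd (Nat.ordProj_dvd _ _)
  set d := Nat.gcd m n
  have hdn : d ∈ n.properDivisors := by
    rw [Nat.mem_properDivisors]
    exact ⟨Nat.gcd_dvd_right _ _, (Nat.gcd_le_left _ hm).trans_lt hmn⟩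
  have h1 : ((p : ℤ) ^ d - 1) * c ∣ (p : ℤ) ^ n - 1 := by
    have := Polynomial.eval_dvd (x := (p : ℤ))
      (Polynomial.X_pow_sub_one_mul_cyclotomic_dvd_X_pow_sub_one_of_dvd ℤ hdn)
    simpa using this
  have h2 : r ^ (a + 1) ∣ p ^ n - 1 := by
    rw [← Int.natCast_dvd_natCast, cast]
    refine dvd_trans ?_ h1
    rw [pow_succ, Nat.cast_mul]
    refine mul_dvd_mul ?_ hrc'
    rw [← cast]
    exact_mod_cast hg
  exact Nat.pow_succ_factorization_not_dvd hne hr h2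

lemma aux_orbit {G X : Type*} [Group G] [Finite G] [MulAction G X] {r a : ℕ} [Fact r.Prime]
    (P : Sylow r G) (x : X) (h : r ^ a ∣ Nat.card (MulAction.orbit G x)) :
    r ^ a ∣ Nat.card (MulAction.orbit (P : Subgroup G) x) := by
  have e1 : Nat.card (MulAction.orbit G x) * Nat.card (MulAction.stabilizer G x) = Nat.card G := by
    rw [← Nat.card_prod]
    exact Nat.card_congr (MulAction.orbitProdStabilizerEquivGroup G x)
  have e2 : Nat.card (MulAction.orbit (P : Subgroup G) x) *
      Nat.card (MulAction.stabilizer (P : Subgroup G) x) = Nat.card (P : Subgroup G) := by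
    rw [← Nat.card_prod]
    exact Nat.card_congr (MulAction.orbitProdStabilizerEquivGroup (P : Subgroup G) x)
  obtain ⟨c, hc⟩ := IsPGroup.iff_card.mp
    (P.2.to_subgroup (MulAction.stabilizer (P : Subgroup G) x))
  have hd : Nat.card (MulAction.stabilizer (P : Subgroup G) x) ∣
      Nat.card (MulAction.stabilizer G x) := by
    let f : MulAction.stabilizer (P : Subgroup G) x →* MulAction.stabilizer G x :=
      { toFun := fun g => ⟨((g : (P : Subgroup G)) : G), g.2⟩
        map_one' := rfl
        map_mul' := fun _ _ => rfl }
    refine Subgroup.card_dvd_of_injective f ?_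
    intro g g' hgg
    have := congrArg Subtype.val hgg
    exact Subtype.ext (Subtype.ext this)
  have h3 : r ^ (a + c) ∣ Nat.card (P : Subgroup G) := by
    apply P.pow_dvd_card_of_pow_dvd_card
    rw [← e1, pow_add, ← hc]
    exact mul_dvd_mul h hd
  rw [← e2, hc, pow_add] at h3
  exact Nat.dvd_of_mul_dvd_mul_right (pow_pos (Fact.out : r.Prime).pos c) h3

lemma aux_sum {G Y : Type*} [Group G] [MulAction G Y] [Finite Y] {k : ℕ}
    (h : ∀ y : Y, k ∣ Nat.card (MulAction.orbit G y)) : k ∣ Nat.card Y := by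
  classical
  haveI := Fintype.ofFinite (MulAction.orbitRel.Quotient G Y)
  rw [Nat.card_congr (MulAction.selfEquivSigmaOrbits G Y), Nat.card_sigma]
  exact Finset.dvd_sum fun q _ => h _

theorem stmt8 {p : ℕ} (hp : p.Prime) {V : Type*} [AddCommGroup V] [Module (ZMod p) V]
    [Finite V] (hcard : 3 ≤ Nat.card V)
    (G₀ : Subgroup (V ≃ₗ[ZMod p] V))
    (htrans : ∀ v w : V, v ≠ 0 → w ≠ 0 → ∃ g ∈ G₀, g v = w) :
    ∃ g ∈ G₀, g ≠ 1 ∧ ∀ (n : ℤ) (v : V), v ≠ 0 → (g ^ n) v = v → g ^ n = 1 := by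
  haveI : Fact p.Prime := ⟨hp⟩
  haveI : Finite (V ≃ₗ[ZMod p] V) := DFunLike.finite _
  have hV : Nat.card V = p ^ Module.finrank (ZMod p) V := by
    rw [Module.natCard_eq_pow_finrank (K := ZMod p) (V := V), Nat.card_zmod]
  obtain ⟨r, a, hr, ha, hdvd, hnot⟩ := aux_num hp.two_le (hV ▸ hcard)
  haveI : Fact r.Prime := ⟨hr⟩
  rw [← hV] at hdvd
  obtain ⟨P⟩ : Nonempty (Sylow r G₀) := inferInstance
  have horb : ∀ v : V, v ≠ 0 → MulAction.orbit G₀ v = Set.univ \ {0} := by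
    intro v hv
    ext w
    simp only [Set.mem_diff, Set.mem_univ, Set.mem_singleton_iff, true_and]
    constructor
    · rintro ⟨g, rfl⟩ h0
      exact hv ((g : V ≃ₗ[ZMod p] V).map_eq_zero_iff.mp h0)
    · intro hw
      obtain ⟨g, hg, e⟩ := htrans v w hv hw
      exact ⟨⟨g, hg⟩, e⟩
  have hGorb : ∀ v : V, v ≠ 0 → r ^ a ∣ Nat.card (MulAction.orbit G₀ v) := by
    intro v hv
    rw [horb v hv, Nat.card_coe_set_eq, Set.ncard_diff_singleton_of_mem (Set.mem_univ _),
      Set.ncard_univ]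
    exact hdvd
  have hPorb : ∀ v : V, v ≠ 0 → r ^ a ∣ Nat.card (MulAction.orbit (P : Subgroup G₀) v) :=
    fun v hv => aux_orbit P v (hGorb v hv)
  -- the Sylow subgroup is nontrivial
  haveI : Nontrivial V := Finite.one_lt_card_iff_nontrivial.mp (by omega)
  obtain ⟨v₀, hv₀⟩ := exists_ne (0 : V)
  haveI : Nontrivial (P : Subgroup G₀) := by
    by_contra hcon
    rw [not_nontrivial_iff_subsingleton] at hcon
    have h1 := hPorb v₀ hv₀
    have h2 : Nat.card (MulAction.orbit (P : Subgroup G₀) v₀) ∣ Nat.card (P : Subgroup G₀) :=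
      ⟨_, ((Nat.card_prod _ _).symm.trans (Nat.card_congr
        (MulAction.orbitProdStabilizerEquivGroup (P : Subgroup G₀) v₀))).symm⟩
    have h3 := h1.trans h2
    rw [Nat.card_of_subsingleton (1 : (P : Subgroup G₀)), Nat.dvd_one] at h3
    exact (Nat.one_lt_pow ha.ne' hr.one_lt).ne' h3
  haveI := P.2.center_nontrivial
  obtain ⟨z, hz⟩ := exists_ne (1 : Subgroup.center (P : Subgroup G₀))
  -- key claim
  have key : ∀ h : Subgroup.center (P : Subgroup G₀), ∀ v : V, v ≠ 0 →
      (((h : (P : Subgroup G₀)) : G₀) : V ≃ₗ[ZMod p] V) v = v →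
      (((h : (P : Subgroup G₀)) : G₀) : V ≃ₗ[ZMod p] V) = 1 := by
    intro h v hv hfix
    set t : V ≃ₗ[ZMod p] V := (((h : (P : Subgroup G₀)) : G₀) : V ≃ₗ[ZMod p] V) with ht
    by_contra hne
    let F : Submodule (ZMod p) V := LinearMap.eqLocus (t : V →ₗ[ZMod p] V) LinearMap.id
    have hF : ∀ w, w ∈ F ↔ t w = w := fun w => Iff.rfl
    have hlt : Module.finrank (ZMod p) F < Module.finrank (ZMod p) V := by
      apply Submodule.finrank_lt
      intro htop
      apply hne
      ext w
      exact (hF w).mp (htop ▸ Submodule.mem_top)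
    have hpos : 0 < Module.finrank (ZMod p) F := by
      haveI : Nontrivial F := ⟨⟨⟨v, hfix⟩, 0, fun e => hv (congrArg Subtype.val e)⟩⟩
      exact Module.finrank_pos
    apply hnot _ hpos hlt
    have hFc : Nat.card F = p ^ Module.finrank (ZMod p) F := by
      rw [Module.natCard_eq_pow_finrank (K := ZMod p) (V := F), Nat.card_zmod]
    rw [← hFc]
    let S : SubMulAction (P : Subgroup G₀) V :=
      { carrier := (F : Set V) \ {0}
        smul_mem' := by
          rintro c w ⟨hw, hw0⟩
          refine ⟨?_, fun h0 => hw0 (((c : G₀) : V ≃ₗ[ZMod p] V).map_eq_zero_iff.mp h0)⟩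
          have hcm : c * (h : (P : Subgroup G₀)) = h * c := Subgroup.mem_center_iff.mp h.2 c
          change (h : (P : Subgroup G₀)) • c • w = c • w
          rw [smul_smul, ← hcm, ← smul_smul]
          exact congrArg (c • ·) hw }
    have hS : Nat.card S = Nat.card F - 1 := by
      change Nat.card ((F : Set V) \ {0} : Set V) = _
      rw [Nat.card_coe_set_eq, Set.ncard_diff_singleton_of_mem F.zero_mem]
      rfl
    rw [← hS]
    refine aux_sum (G := (P : Subgroup G₀)) fun y => ?_
    have := hPorb (y : V) y.2.2
    rw [← SubMulAction.val_image_orbit, Nat.card_image_of_injective Subtype.val_injective] at this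
    exact this
  refine ⟨(((z : (P : Subgroup G₀)) : G₀) : V ≃ₗ[ZMod p] V), ((z : (P : Subgroup G₀)) : G₀).2,
    ?_, ?_⟩
  · intro h
    exact hz (Subtype.ext (Subtype.ext (Subtype.ext h)))
  · intro n v hv hfix
    exact key (z ^ n) v hv hfix
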